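/- Let B' be a k×n complex matrix of rank k, and suppose dist(Z_j, H_j) ≥ d > 0 for every row Z_j (H_j being the span of the other rows). Then for every i with k − n + i ≥ 1 (i.e., i ≥ n − k), the singular value s_{n−i}(B') satisfies s_{n−i}(B')² ≥ d²(k − n + i)/k. -/

import Mathlib

/-- The singular values of a rectangular complex matrix, in nonincreasing order:
the square roots of the eigenvalues of B * Bᴴ, sorted nonincreasingly. -/
noncomputable def svals {k n : ℕ} (B : Matrix (Fin k) (Fin n) ℂ) : Fin k → ℝ :=
  fun i =>
    Real.sqrt ((Matrix.isHermitian_mul_conjTranspose_self B).eigenvalues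
      (Tuple.sort (Matrix.isHermitian_mul_conjTranspose_self B).eigenvalues i.rev))

/-!
Let `G` be the Gram matrix of linearly independent vectors `v₁, …, v_k`. The dual vector
`u_j = ∑ i, (G⁻¹)ᵢⱼ vᵢ` is orthogonal to the span `H_j` of the other vectors, and
`‖u_j‖² = (G⁻¹)ⱼⱼ`. Since `v_j - u_j / ‖u_j‖²` lies in `H_j`, the distance from `v_j` to `H_j`
is `1 / ‖u_j‖`. Summing over `j` gives `tr G⁻¹ = ∑ dist(v_j, H_j)⁻²`; for the rows of `B` the
left side is `∑ s_j⁻²` (the negative second moment identity). At least `k - r` of the `k`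
summands `s_j⁻²` are no smaller than the one of (zero-based) index `r`, and the right side is at
most `k / d²`.
-/

open Matrix
open scoped ComplexOrder InnerProductSpace

theorem card_Ici_nsmul_le_sum {ι M : Type*} [Fintype ι] [Preorder ι] [LocallyFiniteOrderTop ι]
    [AddCommMonoid M] [PartialOrder M] [IsOrderedAddMonoid M] {f : ι → M} (hf : Monotone f)
    (hf₀ : ∀ i, 0 ≤ f i) (a : ι) : (Finset.Ici a).card • f a ≤ ∑ i, f i :=
  calc
    (Finset.Ici a).card • f a ≤ ∑ i ∈ Finset.Ici a, f i :=
      Finset.card_nsmul_le_sum _ _ _ fun _ hi ↦ hf (Finset.mem_Ici.1 hi)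
    _ ≤ ∑ i, f i :=
      Finset.sum_le_sum_of_subset_of_nonneg (Finset.subset_univ _) fun i _ _ ↦ hf₀ i

/-- The distance `dist(v_j, H_j)` from the `j`-th vector of a family to the span `H_j` of the
other vectors. -/
noncomputable def distToOthers (𝕜 : Type*) {E ι : Type*} [Semiring 𝕜] [SeminormedAddCommGroup E]
    [Module 𝕜 E] (v : ι → E) (j : ι) : ℝ :=
  Metric.infDist (v j) (Submodule.span 𝕜 {w | ∃ i, i ≠ j ∧ w = v i} : Set E)

theorem linearIndependent_of_distToOthers_pos {𝕜 E ι : Type*} [DivisionRing 𝕜]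
    [SeminormedAddCommGroup E] [Module 𝕜 E] {v : ι → E} (hv : ∀ j, 0 < distToOthers 𝕜 v j) :
    LinearIndependent 𝕜 v := by
  refine linearIndependent_iff_notMem_span.2 fun j hj ↦ (hv j).ne' ?_
  have others_eq : {w | ∃ i, i ≠ j ∧ w = v i} = v '' (Set.univ \ {j}) := by
    ext w
    simp [eq_comm]
  rw [distToOthers, others_eq]
  exact Metric.infDist_zero_of_mem hj

section Gram

variable {𝕜 E ι : Type*} [RCLike 𝕜] [NormedAddCommGroup E] [InnerProductSpace 𝕜 E]

theorem infDist_eq_norm_of_sub_mem_of_mem_orthogonal {K : Submodule 𝕜 E} {x w : E}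
    (hx : x - w ∈ K) (hw : w ∈ Kᗮ) : Metric.infDist x K = ‖w‖ := by
  refine le_antisymm ?_ ((Metric.le_infDist ⟨0, K.zero_mem⟩).2 fun y hy ↦ ?_)
  · simpa only [dist_eq_norm, sub_sub_cancel] using
      Metric.infDist_le_dist_of_mem (x := x) (SetLike.mem_coe.2 hx)
  · have orthogonal : ⟪w, x - w - y⟫_𝕜 = 0 :=
      K.inner_left_of_mem_orthogonal (K.sub_mem hx hy) hw
    have pythagoras := norm_add_sq_eq_norm_sq_add_norm_sq_of_inner_eq_zero _ _ orthogonal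
    rw [← add_sub_assoc, add_sub_cancel] at pythagoras
    rw [dist_eq_norm, mul_self_le_mul_self_iff (norm_nonneg w) (norm_nonneg _), pythagoras]
    exact le_add_of_nonneg_right (mul_self_nonneg _)

variable [Fintype ι] [DecidableEq ι]

variable (𝕜) in
/-- The family dual to `v` in the span of `v`, written in terms of the inverse of the Gram matrix;
it is meaningful only for linearly independent `v`, where the Gram matrix is invertible. -/
noncomputable def gramDual (v : ι → E) (j : ι) : E :=
  ∑ i, (gram 𝕜 v)⁻¹ i j • v i

variable {v : ι → E}

theorem inner_gramDual (hv : LinearIndependent 𝕜 v) (i j : ι) :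
    ⟪v i, gramDual 𝕜 v j⟫_𝕜 = (1 : Matrix ι ι 𝕜) i j := by
  have hdet : IsUnit (gram 𝕜 v).det := (det_gram_ne_zero_iff_linearIndependent.2 hv).isUnit
  rw [← mul_nonsing_inv _ hdet, mul_apply]
  simp only [gramDual, inner_sum, inner_smul_right, gram_apply, mul_comm]

theorem inner_gramDual_self (hv : LinearIndependent 𝕜 v) (j : ι) :
    ⟪gramDual 𝕜 v j, gramDual 𝕜 v j⟫_𝕜 = (gram 𝕜 v)⁻¹ j j := by
  nth_rw 1 [gramDual]
  simp only [sum_inner, inner_smul_left, inner_gramDual hv, one_apply, mul_ite, mul_one, mul_zero,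
    Finset.sum_ite_eq', Finset.mem_univ, if_true]
  exact (isHermitian_gram 𝕜 v).inv.apply j j

theorem gramDual_ne_zero (hv : LinearIndependent 𝕜 v) (j : ι) : gramDual 𝕜 v j ≠ 0 := by
  intro h
  simpa [h] using inner_gramDual hv j j

theorem gramDual_mem_orthogonal (hv : LinearIndependent 𝕜 v) (j : ι) :
    gramDual 𝕜 v j ∈ (Submodule.span 𝕜 {w | ∃ i, i ≠ j ∧ w = v i})ᗮ := by
  have isOrtho : Submodule.span 𝕜 {gramDual 𝕜 v j} ⟂
      Submodule.span 𝕜 {w | ∃ i, i ≠ j ∧ w = v i} := by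
    refine (Submodule.isOrtho_span.2 ?_).symm
    rintro _ ⟨i, hij, rfl⟩ _ rfl
    rw [inner_gramDual hv, one_apply_ne hij]
  exact isOrtho (Submodule.mem_span_singleton_self _)

theorem distToOthers_eq_inv_norm_gramDual (hv : LinearIndependent 𝕜 v) (j : ι) :
    distToOthers 𝕜 v j = ‖gramDual 𝕜 v j‖⁻¹ := by
  set u := gramDual 𝕜 v j with hu
  set c : 𝕜 := (gram 𝕜 v)⁻¹ j j with hc
  have hc_norm : c = (‖u‖ : 𝕜) ^ 2 := by
    rw [hc, ← inner_gramDual_self hv, inner_self_eq_norm_sq_to_K]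
  have hu₀ : ‖u‖ ≠ 0 := norm_ne_zero_iff.2 (gramDual_ne_zero hv j)
  have hc₀ : c ≠ 0 := by simpa [hc_norm] using hu₀
  have sub_mem_span : v j - c⁻¹ • u ∈ Submodule.span 𝕜 {w | ∃ i, i ≠ j ∧ w = v i} := by
    have coeff_j_cancels : v j - c⁻¹ • u =
        -∑ i ∈ Finset.univ.erase j, (c⁻¹ * (gram 𝕜 v)⁻¹ i j) • v i := by
      rw [hu, gramDual, Finset.smul_sum, ← Finset.add_sum_erase _ _ (Finset.mem_univ j)]
      simp [smul_smul, ← hc, inv_mul_cancel₀ hc₀]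
    rw [coeff_j_cancels]
    exact neg_mem (sum_mem fun i hi ↦
      Submodule.smul_mem _ _ (Submodule.subset_span ⟨i, Finset.ne_of_mem_erase hi, rfl⟩))
  have smul_mem_orthogonal : c⁻¹ • u ∈ (Submodule.span 𝕜 {w | ∃ i, i ≠ j ∧ w = v i})ᗮ :=
    Submodule.smul_mem _ _ (gramDual_mem_orthogonal hv j)
  calc
    distToOthers 𝕜 v j = ‖c⁻¹ • u‖ :=
      infDist_eq_norm_of_sub_mem_of_mem_orthogonal sub_mem_span smul_mem_orthogonal
    _ = ‖u‖⁻¹ := by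
      rw [norm_smul, norm_inv, hc_norm, norm_pow, RCLike.norm_ofReal, abs_norm]
      field_simp

theorem inv_gram_apply_self (hv : LinearIndependent 𝕜 v) (j : ι) :
    (gram 𝕜 v)⁻¹ j j = (((distToOthers 𝕜 v j ^ 2)⁻¹ : ℝ) : 𝕜) := by
  rw [distToOthers_eq_inv_norm_gramDual hv, ← inner_gramDual_self hv, inner_self_eq_norm_sq_to_K]
  simp

end Gram

section NegativeSecondMoment

variable {𝕜 m n : Type*}

/-- The rows of a matrix as vectors of Euclidean space, so that they carry the `ℓ²` norm. -/
def euclideanRow (B : Matrix m n 𝕜) (i : m) : EuclideanSpace 𝕜 n :=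
  WithLp.toLp 2 (B i)

variable [RCLike 𝕜] [Fintype n]

theorem mul_conjTranspose_self_eq_transpose_gram (B : Matrix m n 𝕜) :
    B * Bᴴ = (gram 𝕜 (euclideanRow B))ᵀ := by
  ext i j
  simp [euclideanRow, mul_apply, PiLp.inner_apply]

variable [Fintype m] [DecidableEq m]

theorem trace_inv_eq_sum_inv_eigenvalues {A : Matrix m m 𝕜} (hA : A.IsHermitian)
    (hdet : IsUnit A.det) : A⁻¹.trace = ((∑ i, (hA.eigenvalues i)⁻¹ : ℝ) : 𝕜) := by
  have eigenvalues_ne_zero : ∀ i, (hA.eigenvalues i : 𝕜) ≠ 0 := by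
    simpa [hA.det_eq_prod_eigenvalues, Finset.prod_ne_zero_iff] using hdet
  set φ := Unitary.conjStarAlgAut 𝕜 (Matrix m m 𝕜) hA.eigenvectorUnitary
  have trace_conj (X : Matrix m m 𝕜) : (φ X).trace = X.trace := by
    rw [Unitary.conjStarAlgAut_apply, trace_mul_cycle, Unitary.coe_star_mul_self, one_mul]
  have inv_eq : A⁻¹ = φ (diagonal fun i ↦ (hA.eigenvalues i : 𝕜)⁻¹) := by
    refine inv_eq_right_inv ?_
    nth_rw 1 [hA.spectral_theorem]
    rw [← map_mul, diagonal_mul_diagonal]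
    simp [eigenvalues_ne_zero]
  rw [inv_eq, trace_conj, trace_diagonal]
  simp only [map_sum, RCLike.ofReal_inv]

theorem sum_inv_eigenvalues_mul_conjTranspose_self {B : Matrix m n 𝕜}
    (hB : LinearIndependent 𝕜 (euclideanRow B)) :
    ∑ i, ((isHermitian_mul_conjTranspose_self B).eigenvalues i)⁻¹ =
      ∑ j, (distToOthers 𝕜 (euclideanRow B) j ^ 2)⁻¹ := by
  have hdet : IsUnit (B * Bᴴ).det := by
    rw [mul_conjTranspose_self_eq_transpose_gram, det_transpose]
    exact (det_gram_ne_zero_iff_linearIndependent.2 hB).isUnit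
  apply RCLike.ofReal_injective (K := 𝕜)
  rw [← trace_inv_eq_sum_inv_eigenvalues _ hdet, mul_conjTranspose_self_eq_transpose_gram,
    ← transpose_nonsing_inv, trace_transpose, trace]
  simp only [diag_apply, inv_gram_apply_self hB, map_sum]

end NegativeSecondMoment

section SingularValues

variable {k n : ℕ}

theorem svals_sq (B : Matrix (Fin k) (Fin n) ℂ) (r : Fin k) :
    svals B r ^ 2 = (isHermitian_mul_conjTranspose_self B).eigenvalues
      (Tuple.sort (isHermitian_mul_conjTranspose_self B).eigenvalues r.rev) :=
  Real.sq_sqrt (eigenvalues_self_mul_conjTranspose_nonneg B _)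

theorem svals_sq_antitone (B : Matrix (Fin k) (Fin n) ℂ) : Antitone fun r ↦ svals B r ^ 2 := by
  intro p q hpq
  simp only [svals_sq]
  exact Tuple.monotone_sort (isHermitian_mul_conjTranspose_self B).eigenvalues
    (Fin.rev_le_rev.2 hpq)

variable {B : Matrix (Fin k) (Fin n) ℂ}

theorem svals_sq_pos (hB : LinearIndependent ℂ (euclideanRow B)) (r : Fin k) :
    0 < svals B r ^ 2 := by
  have posDef : (B * Bᴴ).PosDef := by
    rw [mul_conjTranspose_self_eq_transpose_gram]
    exact (posDef_gram_of_linearIndependent hB).transpose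
  rw [svals_sq]
  exact posDef.eigenvalues_pos _

theorem sum_inv_svals_sq (hB : LinearIndependent ℂ (euclideanRow B)) :
    ∑ r, (svals B r ^ 2)⁻¹ = ∑ j, (distToOthers ℂ (euclideanRow B) j ^ 2)⁻¹ := by
  simp only [← sum_inv_eigenvalues_mul_conjTranspose_self hB, svals_sq]
  exact Equiv.sum_comp (Fin.revPerm.trans (Tuple.sort _)) fun i ↦
    ((isHermitian_mul_conjTranspose_self B).eigenvalues i)⁻¹

theorem sub_mul_inv_svals_sq_le_sum (hB : LinearIndependent ℂ (euclideanRow B)) (r : Fin k) :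
    ((k : ℝ) - r) * (svals B r ^ 2)⁻¹ ≤ ∑ j, (distToOthers ℂ (euclideanRow B) j ^ 2)⁻¹ := by
  have inv_mono : Monotone fun q ↦ (svals B q ^ 2)⁻¹ := fun p q hpq ↦
    inv_anti₀ (svals_sq_pos hB q) (svals_sq_antitone B hpq)
  have := card_Ici_nsmul_le_sum inv_mono (fun q ↦ (inv_pos.2 (svals_sq_pos hB q)).le) r
  rwa [Fin.card_Ici, nsmul_eq_mul, Nat.cast_sub r.is_lt.le, sum_inv_svals_sq hB] at this

theorem stmt14_general (B : Matrix (Fin k) (Fin n) ℂ) {d : ℝ} (hd : 0 < d)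
    (hdist : ∀ j, d ≤ distToOthers ℂ (euclideanRow B) j) (r : Fin k) :
    d ^ 2 * ((k : ℝ) - r) / k ≤ svals B r ^ 2 := by
  have hB : LinearIndependent ℂ (euclideanRow B) :=
    linearIndependent_of_distToOthers_pos fun j ↦ hd.trans_le (hdist j)
  have hk : (0 : ℝ) < k := Nat.cast_pos.2 r.pos
  have moment_bound : ((k : ℝ) - r) / svals B r ^ 2 ≤ k / d ^ 2 := calc
    ((k : ℝ) - r) / svals B r ^ 2 ≤ ∑ j, (distToOthers ℂ (euclideanRow B) j ^ 2)⁻¹ :=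
      sub_mul_inv_svals_sq_le_sum hB r
    _ ≤ ∑ _ : Fin k, (d ^ 2)⁻¹ := by gcongr with j; exact hdist j
    _ = k / d ^ 2 := by simp [div_eq_mul_inv]
  rw [div_le_div_iff₀ (svals_sq_pos hB r) (by positivity)] at moment_bound
  rw [div_le_iff₀ hk]
  linarith

end SingularValues

/-- If B is a full rank k×n matrix whose every row is at distance at least d > 0 from
the span of the other rows, then for every i ≥ n − k (with i < n),
s_{n−i}(B)² ≥ d²(k − n + i)/k. -/
theorem stmt14 {k n : ℕ} (hk : 0 < k) (hkn : k ≤ n)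
    (B : Matrix (Fin k) (Fin n) ℂ) (hrank : B.rank = k)
    (Z : Fin k → EuclideanSpace ℂ (Fin n))
    (hZ : ∀ i, Z i = (EuclideanSpace.equiv (Fin n) ℂ).symm (B i))
    (d : ℝ) (hd : 0 < d)
    (hdist : ∀ j : Fin k, d ≤ Metric.infDist (Z j)
      (Submodule.span ℂ {v | ∃ i, i ≠ j ∧ v = Z i} : Set (EuclideanSpace ℂ (Fin n)))) :
    ∀ (i : ℕ) (h1 : n - k ≤ i) (h2 : i < n),
      d ^ 2 * ((k : ℝ) - n + i) / k ≤ (svals B ⟨n - i - 1, by omega⟩) ^ 2 := by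
  intro i h1 h2
  obtain rfl : Z = euclideanRow B := funext hZ
  refine le_trans ?_ (stmt14_general B hd hdist ⟨n - i - 1, by omega⟩)
  have index_le : ((n - i - 1 : ℕ) : ℝ) ≤ n - i := by
    rw [le_sub_iff_add_le]
    exact_mod_cast (by omega : n - i - 1 + i ≤ n)
  gcongr
  linarith
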